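/- For the 4n-parametric family of Lie brackets on ℝ^{4n}, the following four conditions are equivalent: (i) ‖∇J‖² = 0 (the manifold is isotropic Kähler), where ‖∇J‖² = Σ_{i,k,p} ε_i ε_k ε_p F(X_i,X_k,X_p)² with F(x,y,z) = ½(g([x,Jy],z) − g([x,y],Jz)); (ii) the scalar curvature vanishes, τ = 0, where τ = Σ_i ε_i ρ(X_i,X_i) and ρ(y,z) = Σ_i ε_i R(X_i,y,z,X_i) with R(x,y,z,u) = −¼g([x,y],[z,u]); (iii) the Nijenhuis tensor is isotropic, i.e. ‖N‖² = Σ_{i,j} ε_i ε_j g(N(X_i,X_j),N(X_i,X_j)) = 0, where N(x,y) = [x,y] + J[Jx,y] + J[x,Jy] − [Jx,Jy]; (iv) Σ_{α=1}^{n} (λ_{4α−3}² + λ_{4α−2}² − λ_{4α−1}² − λ_{4α}²) = 0. -/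

import Mathlib

/-!
All four conditions say that the parameter vector `λ`, regarded as an element of `ℝ^{4n}`, is
isotropic for `g`.

The form `g([x, y], z)` is alternating. Let `J₁, J₂` insert `J` into an argument of a product
`b : V × V → V`, and let `J₃` apply `J` to its value. For the scalar product
`⟨b, b'⟩ = ∑ εᵢ εⱼ g(b(Xᵢ, Xⱼ), b'(Xᵢ, Xⱼ))` these are commuting self-adjoint operators of square
`-1`. If `b` is the bracket, `‖b‖² = ⟨b, b⟩` and `B = ⟨J₁b, J₂b⟩ = ⟨J₁b, J₃b⟩ = ⟨J₂b, J₃b⟩`, then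
* `∇J` corresponds to `½(J₂ - J₃)b`, hence `‖∇J‖² = -½(‖b‖² + B)`;
* `N = Pb` with `P = 1 + J₃J₁ + J₃J₂ - J₁J₂` and `P² = 4P`, hence `‖N‖² = 4(‖b‖² + B)`;
* `τ = ¼‖b‖²`.

On each block `g([x, y], z)` is the volume form of `ℝ⁴` contracted with a vector depending linearly
on `λ`. As `tr J = 0`, the product `(J₁ + J₂ + J₃)b` is then again of this kind: it is the bracket
with parameter `Jλ`. Since `‖b‖² = -6 g(λ, λ)` and `g(Jλ, Jλ) = -g(λ, λ)`, comparing norms gives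
`6B - 3‖b‖² = -‖b‖²`, that is `B = ⅓‖b‖² = -2 g(λ, λ)`.
-/

noncomputable section

/-- The signature of the basis vectors inside each block: `(+, +, -, -)`. -/
def sgn : Fin 4 → ℝ := ![1, 1, -1, -1]

/-- Structure constants of the bracket inside one block, depending on the four
parameters `l 0 = λ_1̄`, `l 1 = λ_2̄`, `l 2 = λ_3̄`, `l 3 = λ_4̄`:
`sc l r s` is the coordinate vector of `[X_r, X_s]`. -/
def sc (l : Fin 4 → ℝ) : Fin 4 → Fin 4 → Fin 4 → ℝ :=
  ![![![0, 0, 0, 0], ![0, 0, l 1, -l 0], ![0, l 1, 0, l 3], ![0, -l 0, -l 3, 0]],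
    ![![0, 0, -l 1, l 0], ![0, 0, 0, 0], ![-l 1, 0, 0, -l 2], ![l 0, 0, l 2, 0]],
    ![![0, -l 1, 0, -l 3], ![l 1, 0, 0, l 2], ![0, 0, 0, 0], ![-l 3, l 2, 0, 0]],
    ![![0, l 0, l 3, 0], ![-l 0, 0, -l 2, 0], ![l 3, -l 2, 0, 0], ![0, 0, 0, 0]]]

/-- `V n = ℝ^{4n}`, with coordinates indexed by a block `α : Fin n` and an
offset `r : Fin 4` (offset `r` corresponds to the basis vector `X_{4α+r+1}`,
i.e. `r = 0,1,2,3` correspond to `1̄,2̄,3̄,4̄`). -/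
abbrev V (n : ℕ) : Type := Fin n × Fin 4 → ℝ

/-- The `4n`-parametric family of brackets on `ℝ^{4n}`: bilinear, vanishing on
pairs of basis vectors from different blocks, and given inside each block `α`
by the structure constants `sc` with parameters `λ_{4α+1},…,λ_{4α+4}`. -/
def brk {n : ℕ} (lam : Fin n × Fin 4 → ℝ) (x y : V n) : V n := fun p =>
  ∑ r : Fin 4, ∑ s : Fin 4,
    x (p.1, r) * y (p.1, s) * sc (fun t => lam (p.1, t)) r s p.2

/-- The standard basis vectors `X_i` of `ℝ^{4n}`. -/
def X {n : ℕ} (i : Fin n × Fin 4) : V n := fun j => if j = i then 1 else 0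

/-- The Norden metric `g`: the standard basis is orthogonal with
`g(X_1̄,X_1̄) = g(X_2̄,X_2̄) = 1`, `g(X_3̄,X_3̄) = g(X_4̄,X_4̄) = -1` in each block. -/
def gf {n : ℕ} (x y : V n) : ℝ := ∑ p : Fin n × Fin 4, sgn p.2 * x p * y p

/-- The almost complex structure `J`: `J X_1̄ = X_3̄`, `J X_2̄ = X_4̄`,
`J X_3̄ = -X_1̄`, `J X_4̄ = -X_2̄` in each block. -/
def Jm {n : ℕ} (x : V n) : V n := fun p =>
  ![-x (p.1, 2), -x (p.1, 3), x (p.1, 0), x (p.1, 1)] p.2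

/-- The tensor `F(x,y,z) = ½(g([x,Jy],z) − g([x,y],Jz))`. -/
def Ff {n : ℕ} (lam : Fin n × Fin 4 → ℝ) (x y z : V n) : ℝ :=
  (1 / 2) * (gf (brk lam x (Jm y)) z - gf (brk lam x y) (Jm z))

/-- The Nijenhuis tensor `N(x,y) = [x,y] + J[Jx,y] + J[x,Jy] − [Jx,Jy]`. -/
def Nt {n : ℕ} (lam : Fin n × Fin 4 → ℝ) (x y : V n) : V n :=
  brk lam x y + Jm (brk lam (Jm x) y) + Jm (brk lam x (Jm y)) -
    brk lam (Jm x) (Jm y)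

/-- The curvature tensor `R(x,y,z,u) = −¼ g([x,y],[z,u])`. -/
def Rc {n : ℕ} (lam : Fin n × Fin 4 → ℝ) (x y z u : V n) : ℝ :=
  -(1 / 4) * gf (brk lam x y) (brk lam z u)

/-- The Ricci tensor `ρ(y,z) = Σ_i ε_i R(X_i,y,z,X_i)` with `ε_i = g(X_i,X_i)`. -/
def ric {n : ℕ} (lam : Fin n × Fin 4 → ℝ) (y z : V n) : ℝ :=
  ∑ i : Fin n × Fin 4, sgn i.2 * Rc lam (X i) y z (X i)

section NordenFrame

variable {R M ι : Type*} [CommRing R] [AddCommGroup M] [Module R M]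

/-- The operator `J₁` on products: insertion of `J` into the first argument. -/
def precomp₁ (J : M →ₗ[R] M) (b : M →ₗ[R] M →ₗ[R] M) : M →ₗ[R] M →ₗ[R] M := b ∘ₗ J

/-- The operator `J₂` on products: insertion of `J` into the second argument. -/
def precomp₂ (J : M →ₗ[R] M) (b : M →ₗ[R] M →ₗ[R] M) : M →ₗ[R] M →ₗ[R] M := b.compl₂ J

/-- The operator `J₃` on products: application of `J` to the value. -/
def postcomp (J : M →ₗ[R] M) (b : M →ₗ[R] M →ₗ[R] M) : M →ₗ[R] M →ₗ[R] M := b.compr₂ J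

lemma precomp₁_precomp₁ {J : M →ₗ[R] M} (hJ : ∀ x, J (J x) = -x) (b : M →ₗ[R] M →ₗ[R] M) :
    precomp₁ J (precomp₁ J b) = -b := by
  ext
  simp [precomp₁, hJ]

lemma precomp₂_precomp₂ {J : M →ₗ[R] M} (hJ : ∀ x, J (J x) = -x) (b : M →ₗ[R] M →ₗ[R] M) :
    precomp₂ J (precomp₂ J b) = -b := by
  ext
  simp [precomp₂, hJ]

lemma postcomp_postcomp {J : M →ₗ[R] M} (hJ : ∀ x, J (J x) = -x) (b : M →ₗ[R] M →ₗ[R] M) :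
    postcomp J (postcomp J b) = -b := by
  ext
  simp [postcomp, hJ]

/-- The Nijenhuis tensor `[x, y] + J[Jx, y] + J[x, Jy] - [Jx, Jy]` of `J` with respect to a
product `[x, y] = b x y`. -/
def nijenhuis (J : M →ₗ[R] M) (b : M →ₗ[R] M →ₗ[R] M) : M →ₗ[R] M →ₗ[R] M :=
  b + postcomp J (precomp₁ J b) + postcomp J (precomp₂ J b) - precomp₁ J (precomp₂ J b)

lemma nijenhuis_nijenhuis {J : M →ₗ[R] M} (hJ : ∀ x, J (J x) = -x) (b : M →ₗ[R] M →ₗ[R] M) :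
    nijenhuis J (nijenhuis J b) = (4 : R) • nijenhuis J b := by
  ext x y
  simp only [nijenhuis, postcomp, precomp₁, precomp₂, LinearMap.sub_apply, LinearMap.add_apply,
    LinearMap.coe_comp, Function.comp_apply, LinearMap.compr₂_apply, LinearMap.compl₂_apply, hJ,
    map_neg, LinearMap.neg_apply, map_add, map_sub, LinearMap.smul_apply]
  module

/-- A product `b` whose associated form `g(b(x, y), z)` is alternating; for a Lie bracket this says
that `g` is ad-invariant. -/
structure IsSkewInvariant (g : LinearMap.BilinForm R M) (b : M →ₗ[R] M →ₗ[R] M) : Prop where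
  skew (x y : M) : b y x = -b x y
  invariant (x y z : M) : g (b x z) y = -g (b x y) z

variable [Fintype ι]

/-- The scalar product `⟨b, b'⟩ = ∑ εᵢ εⱼ g(b(eᵢ, eⱼ), b'(eᵢ, eⱼ))` which the metric `g` with
orthonormal frame `e` of signature `ε` induces on products. -/
def pairing (g : LinearMap.BilinForm R M) (ε : ι → R) (e : ι → M) :
    LinearMap.BilinForm R (M →ₗ[R] M →ₗ[R] M) :=
  LinearMap.mk₂ R (fun b b' => ∑ i, ∑ j, ε i * ε j * g (b (e i) (e j)) (b' (e i) (e j)))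
    (fun _ _ _ => by simp [mul_add, Finset.sum_add_distrib])
    (fun _ _ _ => by simp [Finset.mul_sum, mul_left_comm])
    (fun _ _ _ => by simp [mul_add, Finset.sum_add_distrib])
    (fun _ _ _ => by simp [Finset.mul_sum, mul_left_comm])

lemma pairing_apply (g : LinearMap.BilinForm R M) (ε : ι → R) (e : ι → M)
    (b b' : M →ₗ[R] M →ₗ[R] M) :
    pairing g ε e b b' = ∑ i, ∑ j, ε i * ε j * g (b (e i) (e j)) (b' (e i) (e j)) := rfl

/-- A Norden metric `g` for the complex structure `J`, with a frame `e` of signature `ε`. Given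
`J² = -1`, self-adjointness of `J` is equivalent to `g(Jx, Jy) = -g(x, y)`. Orthonormality of `e`
is encoded by the expansion `x = ∑ εᵢ g(x, eᵢ) eᵢ`. -/
structure IsNordenFrame (g : LinearMap.BilinForm R M) (J : M →ₗ[R] M) (ε : ι → R) (e : ι → M) :
    Prop where
  symm (x y : M) : g x y = g y x
  selfAdjoint (x y : M) : g (J x) y = g x (J y)
  map_map (x : M) : J (J x) = -x
  sum_smul (x : M) : ∑ i, (ε i * g x (e i)) • e i = x

namespace IsNordenFrame

variable {g : LinearMap.BilinForm R M} {J : M →ₗ[R] M} {ε : ι → R} {e : ι → M}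

lemma sum_mul_mul (h : IsNordenFrame g J ε e) (x y : M) :
    ∑ i, ε i * (g x (e i) * g y (e i)) = g x y := by
  rw [h.symm x y]
  conv_rhs => rw [← h.sum_smul x]
  simp [mul_assoc]

lemma sum_apply_map_comm (h : IsNordenFrame g J ε e) (B : LinearMap.BilinForm R M) :
    ∑ i, ε i * B (J (e i)) (e i) = ∑ i, ε i * B (e i) (J (e i)) := by
  have expand (i : ι) : J (e i) = ∑ k, (ε k * g (e i) (J (e k))) • e k := by
    simp only [← h.selfAdjoint, h.sum_smul]
  have expand_left (i : ι) :
      B (J (e i)) (e i) = ∑ k, ε k * g (e i) (J (e k)) * B (e k) (e i) := by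
    rw [expand]
    simp
  have expand_right (k : ι) :
      B (e k) (J (e k)) = ∑ i, ε i * g (e k) (J (e i)) * B (e k) (e i) := by
    rw [expand]
    simp
  calc ∑ i, ε i * B (J (e i)) (e i)
      = ∑ i, ∑ k, ε i * (ε k * g (e i) (J (e k)) * B (e k) (e i)) := by
        simp only [Finset.mul_sum, expand_left]
    _ = ∑ k, ∑ i, ε k * (ε i * g (e k) (J (e i)) * B (e k) (e i)) := by
        rw [Finset.sum_comm]
        refine Finset.sum_congr rfl fun k _ => Finset.sum_congr rfl fun i _ => ?_
        rw [← h.selfAdjoint, h.symm]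
        ring
    _ = ∑ k, ε k * B (e k) (J (e k)) := by
        simp only [Finset.mul_sum, expand_right]

variable (b b' : M →ₗ[R] M →ₗ[R] M)

lemma pairing_comm (h : IsNordenFrame g J ε e) : pairing g ε e b b' = pairing g ε e b' b := by
  simp only [pairing_apply, h.symm (b _ _)]

lemma pairing_precomp₁_left (h : IsNordenFrame g J ε e) :
    pairing g ε e (precomp₁ J b) b' = pairing g ε e b (precomp₁ J b') := by
  simp only [pairing_apply]
  rw [Finset.sum_comm, Finset.sum_comm (f := fun i j => _ * g (b (e i) _) _)]
  refine Finset.sum_congr rfl fun j _ => ?_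
  simpa [Finset.mul_sum, mul_assoc, mul_left_comm, precomp₁] using
    congrArg (ε j * ·) (h.sum_apply_map_comm (g.compl₁₂ (b.flip (e j)) (b'.flip (e j))))

lemma pairing_precomp₂_left (h : IsNordenFrame g J ε e) :
    pairing g ε e (precomp₂ J b) b' = pairing g ε e b (precomp₂ J b') := by
  refine Finset.sum_congr rfl fun i _ => ?_
  simpa [Finset.mul_sum, mul_assoc, precomp₂] using
    congrArg (ε i * ·) (h.sum_apply_map_comm (g.compl₁₂ (b (e i)) (b' (e i))))

lemma pairing_postcomp_left (h : IsNordenFrame g J ε e) :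
    pairing g ε e (postcomp J b) b' = pairing g ε e b (postcomp J b') := by
  simp [pairing_apply, postcomp, h.selfAdjoint]

lemma pairing_precomp₁_precomp₁ (h : IsNordenFrame g J ε e) :
    pairing g ε e (precomp₁ J b) (precomp₁ J b') = -pairing g ε e b b' := by
  rw [h.pairing_precomp₁_left, precomp₁_precomp₁ h.map_map, map_neg]

lemma pairing_precomp₂_precomp₂ (h : IsNordenFrame g J ε e) :
    pairing g ε e (precomp₂ J b) (precomp₂ J b') = -pairing g ε e b b' := by
  rw [h.pairing_precomp₂_left, precomp₂_precomp₂ h.map_map, map_neg]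

lemma pairing_postcomp_postcomp (h : IsNordenFrame g J ε e) :
    pairing g ε e (postcomp J b) (postcomp J b') = -pairing g ε e b b' := by
  rw [h.pairing_postcomp_left, postcomp_postcomp h.map_map, map_neg]

variable {b}

lemma pairing_precomp₁_postcomp (h : IsNordenFrame g J ε e) (hb : IsSkewInvariant g b) :
    pairing g ε e (precomp₁ J b) (postcomp J b) = pairing g ε e (precomp₁ J b) (precomp₂ J b) := by
  refine Finset.sum_congr rfl fun i _ => ?_
  calc ∑ j, ε i * ε j * g (b (J (e i)) (e j)) (J (b (e i) (e j)))
      = ∑ j, ∑ k, ε i * ε j * (ε k *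
          (g (b (J (e i)) (e j)) (e k) * g (b (e i) (e j)) (J (e k)))) := by
        simp only [← Finset.mul_sum, ← h.selfAdjoint, h.sum_mul_mul]
    _ = ∑ k, ∑ j, ε i * ε k * (ε j *
          (g (b (J (e i)) (e k)) (e j) * g (b (e i) (J (e k))) (e j))) := by
        rw [Finset.sum_comm]
        refine Finset.sum_congr rfl fun k _ => Finset.sum_congr rfl fun j _ => ?_
        rw [hb.invariant _ (e k) (e j), hb.invariant _ (J (e k)) (e j)]
        ring
    _ = ∑ k, ε i * ε k * g (b (J (e i)) (e k)) (b (e i) (J (e k))) := by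
        simp only [← Finset.mul_sum, h.sum_mul_mul]

lemma pairing_precomp₂_postcomp (h : IsNordenFrame g J ε e) (hb : IsSkewInvariant g b) :
    pairing g ε e (precomp₂ J b) (postcomp J b) = pairing g ε e (precomp₁ J b) (precomp₂ J b) := by
  rw [← h.pairing_precomp₁_postcomp hb, pairing_apply, Finset.sum_comm, pairing_apply]
  refine Finset.sum_congr rfl fun i _ => Finset.sum_congr rfl fun j _ => ?_
  simp [precomp₁, precomp₂, postcomp, hb.skew _ (e j), mul_comm (ε j)]

lemma sum_sq_eq_pairing (h : IsNordenFrame g J ε e) :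
    ∑ i, ∑ j, ∑ k, ε i * ε j * ε k * g (b (e i) (e j)) (e k) ^ 2 = pairing g ε e b b := by
  refine Finset.sum_congr rfl fun i _ => Finset.sum_congr rfl fun j _ => ?_
  rw [← h.sum_mul_mul, Finset.mul_sum]
  simp only [sq, mul_assoc]

lemma pairing_precomp₂_sub_postcomp (h : IsNordenFrame g J ε e) (hb : IsSkewInvariant g b) :
    pairing g ε e (precomp₂ J b - postcomp J b) (precomp₂ J b - postcomp J b) =
      -2 * (pairing g ε e b b + pairing g ε e (precomp₁ J b) (precomp₂ J b)) := by
  simp only [map_sub, LinearMap.sub_apply, h.pairing_comm (postcomp J b) (precomp₂ J b),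
    h.pairing_precomp₂_precomp₂, h.pairing_postcomp_postcomp, h.pairing_precomp₂_postcomp hb]
  ring

lemma pairing_nijenhuis_left (h : IsNordenFrame g J ε e) (b b' : M →ₗ[R] M →ₗ[R] M) :
    pairing g ε e (nijenhuis J b) b' = pairing g ε e b (nijenhuis J b') := by
  simp only [nijenhuis, map_add, map_sub, LinearMap.add_apply, LinearMap.sub_apply,
    h.pairing_precomp₁_left, h.pairing_precomp₂_left, h.pairing_postcomp_left]
  rfl

lemma pairing_nijenhuis (h : IsNordenFrame g J ε e) (hb : IsSkewInvariant g b) :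
    pairing g ε e (nijenhuis J b) (nijenhuis J b) =
      4 * (pairing g ε e b b + pairing g ε e (precomp₁ J b) (precomp₂ J b)) := by
  have cross₁ : pairing g ε e b (postcomp J (precomp₁ J b)) =
      pairing g ε e (precomp₁ J b) (precomp₂ J b) := by
    rw [← h.pairing_postcomp_left, h.pairing_comm, h.pairing_precomp₁_postcomp hb]
  have cross₂ : pairing g ε e b (postcomp J (precomp₂ J b)) =
      pairing g ε e (precomp₁ J b) (precomp₂ J b) := by
    rw [← h.pairing_postcomp_left, h.pairing_comm, h.pairing_precomp₂_postcomp hb]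
  calc pairing g ε e (nijenhuis J b) (nijenhuis J b)
      = 4 * pairing g ε e b (nijenhuis J b) := by
        rw [h.pairing_nijenhuis_left, nijenhuis_nijenhuis h.map_map, map_smul, smul_eq_mul]
    _ = 4 * (pairing g ε e b b + pairing g ε e (precomp₁ J b) (precomp₂ J b)) := by
        rw [nijenhuis, map_sub, map_add, map_add, cross₁, cross₂, ← h.pairing_precomp₁_left]
        ring

lemma pairing_precomp₁_add_precomp₂_add_postcomp (h : IsNordenFrame g J ε e)
    (hb : IsSkewInvariant g b) :
    pairing g ε e (precomp₁ J b + precomp₂ J b + postcomp J b)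
        (precomp₁ J b + precomp₂ J b + postcomp J b) =
      6 * pairing g ε e (precomp₁ J b) (precomp₂ J b) - 3 * pairing g ε e b b := by
  simp only [map_add, LinearMap.add_apply, h.pairing_comm (postcomp J b) (precomp₂ J b),
    h.pairing_comm (postcomp J b) (precomp₁ J b), h.pairing_comm (precomp₂ J b) (precomp₁ J b),
    h.pairing_precomp₁_precomp₁, h.pairing_precomp₂_precomp₂, h.pairing_postcomp_postcomp,
    h.pairing_precomp₂_postcomp hb, h.pairing_precomp₁_postcomp hb]
  ring

end IsNordenFrame

end NordenFrame

section Blocks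

variable {n : ℕ}

/-- The form `gf` as a bundled bilinear form. -/
def nordenMetric : LinearMap.BilinForm ℝ (V n) :=
  LinearMap.mk₂ ℝ gf
    (fun _ _ _ => by simp [gf, mul_add, add_mul, Finset.sum_add_distrib])
    (fun _ _ _ => by simp [gf, Finset.mul_sum, mul_assoc, mul_left_comm])
    (fun _ _ _ => by simp [gf, mul_add, Finset.sum_add_distrib])
    (fun _ _ _ => by simp [gf, Finset.mul_sum, mul_left_comm])

lemma nordenMetric_apply (x y : V n) : nordenMetric x y = gf x y := rfl

/-- The map `Jm` as a bundled linear map. -/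
def complexStructure : V n →ₗ[ℝ] V n where
  toFun := Jm
  map_add' x y := by
    ext ⟨α, r⟩
    fin_cases r <;> simp [Jm, add_comm]
  map_smul' a x := by
    ext ⟨α, r⟩
    fin_cases r <;> simp [Jm]

/-- The product `brk lam` as a bundled bilinear map. -/
def bracket (lam : V n) : V n →ₗ[ℝ] V n →ₗ[ℝ] V n :=
  LinearMap.mk₂ ℝ (brk lam)
    (fun _ _ _ => by ext; simp [brk, add_mul, Finset.sum_add_distrib])
    (fun _ _ _ => by ext; simp [brk, Finset.mul_sum, mul_assoc])
    (fun _ _ _ => by ext; simp [brk, mul_add, add_mul, Finset.sum_add_distrib])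
    (fun _ _ _ => by ext; simp [brk, Finset.mul_sum, mul_assoc, mul_left_comm])

lemma gf_eq_sum_blocks (x y : V n) :
    gf x y = ∑ α, (x (α, 0) * y (α, 0) + x (α, 1) * y (α, 1)
      - x (α, 2) * y (α, 2) - x (α, 3) * y (α, 3)) := by
  refine (Fintype.sum_prod_type _).trans (Finset.sum_congr rfl fun α _ => ?_)
  simp [sgn, Fin.sum_univ_four, sub_eq_add_neg]

lemma gf_X (x : V n) (i : Fin n × Fin 4) : gf x (X i) = sgn i.2 * x i := by
  simp [gf, X]

lemma sgn_mul_self (r : Fin 4) : sgn r * sgn r = 1 := by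
  fin_cases r <;> simp [sgn]

lemma gf_Jm_left (x y : V n) : gf (Jm x) y = gf x (Jm y) := by
  simp only [gf_eq_sum_blocks, Jm, Matrix.cons_val]
  refine Finset.sum_congr rfl fun α _ => ?_
  ring

lemma Jm_Jm (x : V n) : Jm (Jm x) = -x := by
  ext ⟨α, r⟩
  fin_cases r <;> simp [Jm]

lemma isNordenFrame_X :
    IsNordenFrame (nordenMetric (n := n)) complexStructure (fun i => sgn i.2) X where
  symm x y := by simp only [nordenMetric_apply, gf, mul_assoc, mul_comm (x _)]
  selfAdjoint := gf_Jm_left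
  map_map := Jm_Jm
  sum_smul x := by
    ext j
    simp [nordenMetric_apply, gf_X, X, ← mul_assoc, sgn_mul_self]

lemma brk_eq (lam x y : V n) : brk lam x y = fun p =>
    ![-lam (p.1, 1) * (x (p.1, 1) * y (p.1, 2) - x (p.1, 2) * y (p.1, 1))
        + lam (p.1, 0) * (x (p.1, 1) * y (p.1, 3) - x (p.1, 3) * y (p.1, 1))
        - lam (p.1, 3) * (x (p.1, 2) * y (p.1, 3) - x (p.1, 3) * y (p.1, 2)),
      lam (p.1, 1) * (x (p.1, 0) * y (p.1, 2) - x (p.1, 2) * y (p.1, 0))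
        - lam (p.1, 0) * (x (p.1, 0) * y (p.1, 3) - x (p.1, 3) * y (p.1, 0))
        + lam (p.1, 2) * (x (p.1, 2) * y (p.1, 3) - x (p.1, 3) * y (p.1, 2)),
      lam (p.1, 1) * (x (p.1, 0) * y (p.1, 1) - x (p.1, 1) * y (p.1, 0))
        - lam (p.1, 3) * (x (p.1, 0) * y (p.1, 3) - x (p.1, 3) * y (p.1, 0))
        + lam (p.1, 2) * (x (p.1, 1) * y (p.1, 3) - x (p.1, 3) * y (p.1, 1)),
      -lam (p.1, 0) * (x (p.1, 0) * y (p.1, 1) - x (p.1, 1) * y (p.1, 0))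
        + lam (p.1, 3) * (x (p.1, 0) * y (p.1, 2) - x (p.1, 2) * y (p.1, 0))
        - lam (p.1, 2) * (x (p.1, 1) * y (p.1, 2) - x (p.1, 2) * y (p.1, 1))] p.2 := by
  ext ⟨α, t⟩
  fin_cases t <;>
    simp only [brk, sc, Fin.sum_univ_four, Fin.zero_eta, Fin.mk_one, Fin.reduceFinMk,
      Matrix.cons_val] <;>
    ring

lemma brk_skew (lam x y : V n) : brk lam y x = -brk lam x y := by
  ext ⟨α, t⟩
  fin_cases t <;>
    simp only [brk_eq, Pi.neg_apply, Fin.zero_eta, Fin.mk_one, Fin.reduceFinMk,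
      Matrix.cons_val] <;>
    ring

lemma gf_brk_invariant (lam x y z : V n) : gf (brk lam x z) y = -gf (brk lam x y) z := by
  simp only [gf_eq_sum_blocks, ← Finset.sum_neg_distrib, brk_eq, Matrix.cons_val]
  refine Finset.sum_congr rfl fun α _ => ?_
  ring

lemma isSkewInvariant_bracket (lam : V n) : IsSkewInvariant nordenMetric (bracket lam) where
  skew := brk_skew lam
  invariant := gf_brk_invariant lam

lemma brk_Jm (lam x y : V n) :
    brk (Jm lam) x y = brk lam (Jm x) y + brk lam x (Jm y) + Jm (brk lam x y) := by
  ext ⟨α, t⟩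
  fin_cases t <;>
    simp only [brk_eq, Jm, Pi.add_apply, Fin.zero_eta, Fin.mk_one, Fin.reduceFinMk,
      Matrix.cons_val] <;>
    ring

lemma bracket_Jm (lam : V n) :
    bracket (Jm lam) = precomp₁ complexStructure (bracket lam) +
      precomp₂ complexStructure (bracket lam) + postcomp complexStructure (bracket lam) :=
  LinearMap.ext₂ (brk_Jm lam)

lemma brk_X_X (lam : V n) (α β : Fin n) (r s : Fin 4) (k : Fin n × Fin 4) :
    brk lam (X (α, r)) (X (β, s)) k =
      if k.1 = α then if k.1 = β then sc (fun t => lam (k.1, t)) r s k.2 else 0 else 0 := by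
  obtain ⟨γ, t⟩ := k
  simp only [brk, X, Prod.mk.injEq, ite_and]
  split_ifs <;> simp

lemma pairing_bracket (lam : V n) :
    pairing nordenMetric (fun i : Fin n × Fin 4 => sgn i.2) X (bracket lam) (bracket lam) =
      -6 * gf lam lam := by
  calc ∑ i : Fin n × Fin 4, ∑ j : Fin n × Fin 4,
        sgn i.2 * sgn j.2 * gf (brk lam (X i) (X j)) (brk lam (X i) (X j))
      = ∑ α, ∑ r, ∑ s, ∑ t, sgn r * sgn s * sgn t * sc (fun t => lam (α, t)) r s t ^ 2 := by
        simp [Fintype.sum_prod_type, gf, brk_X_X, Finset.mul_sum, sq, mul_assoc]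
    _ = -6 * gf lam lam := by
        rw [gf_eq_sum_blocks, Finset.mul_sum]
        refine Finset.sum_congr rfl fun α _ => ?_
        simp only [Fin.sum_univ_four, sc, sgn, Matrix.cons_val]
        ring

lemma pairing_precomp₁_bracket_precomp₂_bracket (lam : V n) :
    pairing nordenMetric (fun i : Fin n × Fin 4 => sgn i.2) X
        (precomp₁ complexStructure (bracket lam)) (precomp₂ complexStructure (bracket lam)) =
      -2 * gf lam lam := by
  have gf_Jm_Jm : gf (Jm lam) (Jm lam) = -gf lam lam := by
    rw [gf_Jm_left, Jm_Jm, ← nordenMetric_apply, map_neg, nordenMetric_apply]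
  have compare_norms := isNordenFrame_X.pairing_precomp₁_add_precomp₂_add_postcomp
    (isSkewInvariant_bracket lam)
  rw [← bracket_Jm, pairing_bracket, pairing_bracket, gf_Jm_Jm] at compare_norms
  linarith

lemma sum_Ff_sq (lam : V n) :
    ∑ i, ∑ k, ∑ p, sgn i.2 * sgn k.2 * sgn p.2 * Ff lam (X i) (X k) (X p) ^ 2 =
      4 * gf lam lam := by
  have Ff_eq (x y z : V n) : Ff lam x y z = 1 / 2 * nordenMetric
      ((precomp₂ complexStructure (bracket lam) - postcomp complexStructure (bracket lam)) x y)
      z := by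
    rw [LinearMap.sub_apply, LinearMap.sub_apply, map_sub, LinearMap.sub_apply, Ff,
      ← gf_Jm_left]
    rfl
  have sq_norm := isNordenFrame_X.pairing_precomp₂_sub_postcomp (isSkewInvariant_bracket lam)
  rw [← isNordenFrame_X.sum_sq_eq_pairing, pairing_bracket,
    pairing_precomp₁_bracket_precomp₂_bracket] at sq_norm
  simp only [Ff_eq, mul_pow, mul_left_comm _ ((1 / 2 : ℝ) ^ 2), ← Finset.mul_sum, sq_norm]
  ring

lemma sum_ric (lam : V n) :
    ∑ i, sgn i.2 * ric lam (X i) (X i) = -(3 / 2) * gf lam lam := by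
  have ric_eq (i : Fin n × Fin 4) : ric lam (X i) (X i) =
      1 / 4 * ∑ j, sgn j.2 * gf (brk lam (X i) (X j)) (brk lam (X i) (X j)) := by
    rw [ric, Finset.mul_sum]
    refine Finset.sum_congr rfl fun j _ => ?_
    rw [Rc, brk_skew lam (X i) (X j), ← nordenMetric_apply, map_neg, LinearMap.neg_apply,
      nordenMetric_apply]
    ring
  calc ∑ i, sgn i.2 * ric lam (X i) (X i)
      = 1 / 4 * ∑ i, ∑ j,
          sgn i.2 * sgn j.2 * gf (brk lam (X i) (X j)) (brk lam (X i) (X j)) := by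
        simp only [ric_eq, Finset.mul_sum, mul_assoc, mul_left_comm (1 / 4 : ℝ)]
    _ = 1 / 4 * (-6 * gf lam lam) := congrArg _ (pairing_bracket lam)
    _ = -(3 / 2) * gf lam lam := by ring

lemma sum_gf_Nt (lam : V n) :
    ∑ i, ∑ j, sgn i.2 * sgn j.2 * gf (Nt lam (X i) (X j)) (Nt lam (X i) (X j)) =
      -32 * gf lam lam := by
  have sq_norm := isNordenFrame_X.pairing_nijenhuis (isSkewInvariant_bracket lam)
  rw [pairing_bracket, pairing_precomp₁_bracket_precomp₂_bracket] at sq_norm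
  change pairing nordenMetric (fun i => sgn i.2) X (nijenhuis complexStructure (bracket lam))
    (nijenhuis complexStructure (bracket lam)) = _
  rw [sq_norm]
  ring

lemma gf_self (x : V n) :
    gf x x = ∑ α, (x (α, 0) ^ 2 + x (α, 1) ^ 2 - x (α, 2) ^ 2 - x (α, 3) ^ 2) := by
  simp only [gf_eq_sum_blocks, sq]

end Blocks

/-- the following are equivalent:
(i) `‖∇J‖² = 0` (the manifold is isotropic Kähler);
(ii) the scalar curvature vanishes, `τ = 0`;
(iii) the Nijenhuis tensor is isotropic, `‖N‖² = 0`;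
(iv) `Σ_α (λ_{4α−3}² + λ_{4α−2}² − λ_{4α−1}² − λ_{4α}²) = 0`. -/
theorem isotropic_Kahler_tfae {n : ℕ} (hn : 1 ≤ n) (lam : Fin n × Fin 4 → ℝ) :
    [(∑ i : Fin n × Fin 4, ∑ k : Fin n × Fin 4, ∑ p : Fin n × Fin 4,
        sgn i.2 * sgn k.2 * sgn p.2 * Ff lam (X i) (X k) (X p) ^ 2) = 0,
      (∑ i : Fin n × Fin 4, sgn i.2 * ric lam (X i) (X i)) = 0,
      (∑ i : Fin n × Fin 4, ∑ j : Fin n × Fin 4,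
        sgn i.2 * sgn j.2 * gf (Nt lam (X i) (X j)) (Nt lam (X i) (X j))) = 0,
      (∑ α : Fin n,
        (lam (α, 0) ^ 2 + lam (α, 1) ^ 2 - lam (α, 2) ^ 2 - lam (α, 3) ^ 2)) = 0].TFAE := by
  rw [sum_Ff_sq, sum_ric, sum_gf_Nt, ← gf_self]
  tfae_have 1 ↔ 4 := by simp
  tfae_have 2 ↔ 4 := by simp
  tfae_have 3 ↔ 4 := by simp
  tfae_finish
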